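/- (Conditional optimality of the GERI program given unconditional probabilities; key step in Propositions 3 and 4.) Let S be a right inverse of H. Then for every strategy p(·) whose values p(v) and whose unconditional probabilities p⁰ = Σ_{v ∈ 𝒱} μ(v) p(v) all lie in the relative interior of Δ, the GERI objective satisfies G(p(·)) ≤ Σ_{v ∈ 𝒱} μ(v) W(v + log S(p⁰)), with equality if and only if p(v) = ∇W(v + log S(p⁰)) for every v ∈ 𝒱 with μ(v) > 0. -/

import Mathlib

/-!
The information cost is a Fenchel conjugate in disguise. The map `max` is convex and `1`-Lipschitz,
hence differentiable Lebesgue-almost everywhere by Rademacher's theorem; as the shocks have an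
absolutely continuous law, one may differentiate under the integral, so the surplus `W` is convex
and differentiable everywhere (`differentiableAt_surplus`). It satisfies `W(v + t𝟙) = W(v) + t`, so the
partial derivatives of `W` sum to one.

If `q` lies in the relative interior of the simplex and `u = log S(q)`, the equation `H(S(q)) = q`
reads `e^{W(u)} ∇W(u) = q`. Summing coordinates gives `W(u) = 0`, whence `∇W(u) = q`, and
therefore `q · log S(q) = W*(q)`, the conjugate of `W`. The Fenchel–Young inequality
`z · q - W*(q) ≤ W(z)`, with equality iff `q = ∇W(z)`, is `fenchel_young`.

Finally `Ω_S(p⁰) = -∑ μ(v) p(v) · log S(p⁰)`, so the GERI objective is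
`∑ μ(v) [(v + log S(p⁰)) · p(v) - p(v) · log S(p(v))]` (`geriObj_eq`), and the claim follows by
applying Fenchel–Young to each `v`.
-/

open MeasureTheory Real

/-- The surplus function `W(v) = E[max_i (v_i + ε_i)]` of an additive random utility model,
where `μ` is the distribution of the random utility shocks `ε`. -/
noncomputable def surplus (N : ℕ) (μ : Measure (Fin N → ℝ)) (v : Fin N → ℝ) : ℝ :=
  ∫ x, (⨆ i : Fin N, (v i + x i)) ∂μ

/-- The choice probability `q_i(v) = P(v_i + ε_i ≥ v_j + ε_j for all j)`. -/
noncomputable def choiceProb (N : ℕ) (μ : Measure (Fin N → ℝ)) (v : Fin N → ℝ) (i : Fin N) : ℝ :=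
  (μ {x | ∀ j, v j + x j ≤ v i + x i}).toReal

/-- `H(y) = ∇(e^W)(log y)`, i.e. `H_i(e^v) = ∂(e^{W(v)})/∂v_i`. -/
noncomputable def genH (N : ℕ) (μ : Measure (Fin N → ℝ)) (y : Fin N → ℝ) (i : Fin N) : ℝ :=
  fderiv ℝ (fun v => Real.exp (surplus N μ v)) (fun j => Real.log (y j)) (Pi.single i 1)

/-- The unit simplex `Δ` in `ℝ^N`. -/
def unitSimplex (N : ℕ) : Set (Fin N → ℝ) := {q | (∀ i, 0 ≤ q i) ∧ ∑ i, q i = 1}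

/-- The relative interior of the unit simplex `Δ` in `ℝ^N`. -/
def unitSimplexRI (N : ℕ) : Set (Fin N → ℝ) := {q | (∀ i, 0 < q i) ∧ ∑ i, q i = 1}

/-- The unconditional choice probabilities `p⁰ = ∑_{v ∈ 𝒱} μ(v) p(v)` of a strategy `p(·)`. -/
noncomputable def uncond (N : ℕ) (V : Finset (Fin N → ℝ)) (w : (Fin N → ℝ) → ℝ)
    (p : (Fin N → ℝ) → (Fin N → ℝ)) (i : Fin N) : ℝ :=
  ∑ v ∈ V, w v * p v i

/-- The generalized entropy `Ω_S(p) = −∑_i p_i log S_i(p)`. -/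
noncomputable def genEntropy (N : ℕ) (S : (Fin N → ℝ) → (Fin N → ℝ)) (p : Fin N → ℝ) : ℝ :=
  -∑ i, p i * Real.log (S p i)

/-- The generalized-entropy information cost
`κ_S(p(·), μ) = Ω_S(p⁰) − ∑_{v ∈ 𝒱} μ(v) Ω_S(p(v))`. -/
noncomputable def geriCost (N : ℕ) (V : Finset (Fin N → ℝ)) (w : (Fin N → ℝ) → ℝ)
    (S : (Fin N → ℝ) → (Fin N → ℝ)) (p : (Fin N → ℝ) → (Fin N → ℝ)) : ℝ :=
  genEntropy N S (uncond N V w p) - ∑ v ∈ V, w v * genEntropy N S (p v)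

/-- The GERI objective `G(p(·)) = ∑_{v ∈ 𝒱} μ(v) (v·p(v)) − κ_S(p(·), μ)`. -/
noncomputable def geriObj (N : ℕ) (V : Finset (Fin N → ℝ)) (w : (Fin N → ℝ) → ℝ)
    (S : (Fin N → ℝ) → (Fin N → ℝ)) (p : (Fin N → ℝ) → (Fin N → ℝ)) : ℝ :=
  ∑ v ∈ V, w v * (∑ i, v i * p v i) - geriCost N V w S p

/-- The coordinatewise maximum, for which `surplus N μ v = ∫ x, coordMax N (v + x) ∂μ`. -/
noncomputable def coordMax (N : ℕ) (y : Fin N → ℝ) : ℝ := ⨆ i, y i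

lemma le_coordMax {N : ℕ} (y : Fin N → ℝ) (i : Fin N) : y i ≤ coordMax N y :=
  le_ciSup (Set.finite_range y).bddAbove i

lemma lipschitzWith_coordMax {N : ℕ} [Nonempty (Fin N)] : LipschitzWith 1 (coordMax N) := by
  refine LipschitzWith.of_le_add fun x y => ciSup_le fun i => ?_
  have h1 := le_coordMax y i
  have h2 := dist_le_pi_dist x y i
  rw [Real.dist_eq] at h2
  linarith [le_abs_self (x i - y i)]

lemma integrable_coordMax {N : ℕ} [Nonempty (Fin N)] {μ : Measure (Fin N → ℝ)}
    [IsProbabilityMeasure μ] (hint : ∀ i, Integrable (fun x => x i) μ) (v : Fin N → ℝ) :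
    Integrable (fun x => coordMax N (v + x)) μ := by
  have hid : Integrable (fun x : Fin N → ℝ => v + x) μ :=
    (integrable_const v).add (Integrable.of_eval hint)
  refine hid.mono
    (lipschitzWith_coordMax.continuous.comp (continuous_const.add continuous_id)).aestronglyMeasurable
    (Filter.Eventually.of_forall fun x => ?_)
  have h := lipschitzWith_coordMax.dist_le_mul (v + x) 0
  have h0 : coordMax N (0 : Fin N → ℝ) = 0 := by simp [coordMax]
  simpa [h0] using h

lemma convexOn_coordMax {N : ℕ} [Nonempty (Fin N)] : ConvexOn ℝ Set.univ (coordMax N) := by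
  refine ⟨convex_univ, fun x _ y _ a b ha hb _ => ciSup_le fun i => ?_⟩
  simp only [Pi.add_apply, Pi.smul_apply, smul_eq_mul]
  gcongr
  · exact le_coordMax x i
  · exact le_coordMax y i

lemma convexOn_surplus {N : ℕ} [Nonempty (Fin N)] {μ : Measure (Fin N → ℝ)}
    [IsProbabilityMeasure μ] (hint : ∀ i, Integrable (fun x => x i) μ) :
    ConvexOn ℝ Set.univ (surplus N μ) := by
  refine ⟨convex_univ, fun x _ y _ a b ha hb hab => ?_⟩
  have hI := integrable_coordMax hint
  have : a • surplus N μ x + b • surplus N μ y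
      = ∫ e, (a * coordMax N (x + e) + b * coordMax N (y + e)) ∂μ := by
    rw [integral_add ((hI x).const_mul a) ((hI y).const_mul b), integral_const_mul,
      integral_const_mul]
    rfl
  rw [this]
  refine integral_mono (hI (a • x + b • y)) (((hI x).const_mul a).add ((hI y).const_mul b))
    fun e => ?_
  have h := convexOn_coordMax.2 (Set.mem_univ (x + e)) (Set.mem_univ (y + e)) ha hb hab
  have he : a • (x + e) + b • (y + e) = a • x + b • y + e := by
    rw [smul_add, smul_add, add_add_add_comm, ← add_smul, hab, one_smul]
  rw [he] at h
  exact h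

lemma surplus_add_const {N : ℕ} [Nonempty (Fin N)] {μ : Measure (Fin N → ℝ)}
    [IsProbabilityMeasure μ] (hint : ∀ i, Integrable (fun x => x i) μ) (v : Fin N → ℝ) (t : ℝ) :
    surplus N μ (v + t • 1) = surplus N μ v + t := by
  have h : ∀ x : Fin N → ℝ, coordMax N (v + t • 1 + x) = coordMax N (v + x) + t := by
    intro x
    rw [coordMax, coordMax, ciSup_add (Set.finite_range _).bddAbove]
    refine iSup_congr fun i => ?_
    simp
    ring
  change ∫ x, coordMax N (v + t • 1 + x) ∂μ = ∫ x, coordMax N (v + x) ∂μ + t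
  simp_rw [h]
  rw [integral_add (integrable_coordMax hint v) (integrable_const t)]
  simp

/-- Ties in the maximum are invisible to an absolutely continuous law: by Rademacher's theorem
`max` is differentiable at `v + ε` almost surely, so the surplus is differentiable everywhere. -/
lemma differentiableAt_surplus {N : ℕ} [Nonempty (Fin N)] {μ : Measure (Fin N → ℝ)}
    [IsProbabilityMeasure μ] (hac : μ ≪ volume) (hint : ∀ i, Integrable (fun x => x i) μ)
    (v : Fin N → ℝ) : DifferentiableAt ℝ (surplus N μ) v := by
  have hae : ∀ᵐ x ∂μ, DifferentiableAt ℝ (coordMax N) (v + x) :=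
    hac.ae_le ((measurePreserving_add_left volume v).quasiMeasurePreserving.ae
      (lipschitzWith_coordMax (N := N)).ae_differentiableAt)
  refine (hasFDerivAt_integral_of_dominated_loc_of_lip (𝕜 := ℝ) (μ := μ)
    (F := fun v x => coordMax N (v + x)) (F' := fun x => fderiv ℝ (coordMax N) (v + x))
    (bound := fun _ => 1) (s := Set.univ) (x₀ := v) Filter.univ_mem
    (Filter.Eventually.of_forall fun w => (integrable_coordMax hint w).aestronglyMeasurable)
    (integrable_coordMax hint v) ?_ ?_ (integrable_const _) ?_).2.differentiableAt
  · exact ((measurable_fderiv ℝ (coordMax N)).comp (measurable_const_add v)).aestronglyMeasurable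
  · refine Filter.Eventually.of_forall fun x => LipschitzWith.lipschitzOnWith ?_
    refine LipschitzWith.of_dist_le_mul fun a b => ?_
    simpa using lipschitzWith_coordMax.dist_le_mul (a + x) (b + x)
  · filter_upwards [hae] with x hx
    exact (hasFDerivAt_comp_add_right x).2 hx.hasFDerivAt

/-- The tangent-plane inequality for a convex function, obtained from the one-variable case along
the segment from `u` to `z`. -/
lemma ConvexOn.tangent_le {E : Type*} [NormedAddCommGroup E] [NormedSpace ℝ E] {f : E → ℝ}
    (hf : ConvexOn ℝ Set.univ f) {u : E} (hd : DifferentiableAt ℝ f u) (z : E) :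
    f u + fderiv ℝ f u (z - u) ≤ f z := by
  have hc := hf.comp_affineMap (AffineMap.lineMap u z : ℝ →ᵃ[ℝ] E)
  have hd' : HasDerivAt (f ∘ (AffineMap.lineMap u z : ℝ →ᵃ[ℝ] E)) (fderiv ℝ f u (z - u)) 0 := by
    refine HasFDerivAt.comp_hasDerivAt (0 : ℝ) ?_ AffineMap.hasDerivAt_lineMap
    simpa using hd.hasFDerivAt
  have h := hc.le_slope_of_hasDerivAt (Set.mem_univ 0) (Set.mem_univ 1) one_pos hd'
  simp [slope] at h
  rw [map_sub]
  linarith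

lemma clm_apply_eq_sum {N : ℕ} (L : (Fin N → ℝ) →L[ℝ] ℝ) (x : Fin N → ℝ) :
    L x = ∑ i, x i * L (Pi.single i 1) := by
  conv_lhs => rw [pi_eq_sum_univ' x]
  simp [map_sum]

lemma sum_fderiv_surplus {N : ℕ} [Nonempty (Fin N)] {μ : Measure (Fin N → ℝ)}
    [IsProbabilityMeasure μ] (hac : μ ≪ volume) (hint : ∀ i, Integrable (fun x => x i) μ)
    (v : Fin N → ℝ) : ∑ i, fderiv ℝ (surplus N μ) v (Pi.single i 1) = 1 := by
  have h1 : fderiv ℝ (surplus N μ) v 1 = ∑ i, fderiv ℝ (surplus N μ) v (Pi.single i 1) := by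
    rw [clm_apply_eq_sum]; simp
  rw [← h1]
  have hd := (differentiableAt_surplus hac hint v).hasFDerivAt.hasLineDerivAt 1
  have hd2 : HasLineDerivAt ℝ (surplus N μ) 1 v 1 := by
    change HasDerivAt (fun t : ℝ => surplus N μ (v + t • 1)) 1 0
    simp_rw [surplus_add_const hint]
    exact (hasDerivAt_id (0 : ℝ)).const_add _
  exact hd.unique hd2

/-- The first-order content of `H(S(q)) = q`: at `u = log S(q)` the surplus vanishes and has
gradient `q`. -/
lemma surplus_log_rightInverse {N : ℕ} [Nonempty (Fin N)] {μ : Measure (Fin N → ℝ)}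
    [IsProbabilityMeasure μ] (hac : μ ≪ volume) (hint : ∀ i, Integrable (fun x => x i) μ)
    {q s : Fin N → ℝ} (hq : ∑ i, q i = 1) (hs : ∀ i, genH N μ s i = q i) :
    surplus N μ (fun j => Real.log (s j)) = 0 ∧
      ∀ i, fderiv ℝ (surplus N μ) (fun j => Real.log (s j)) (Pi.single i 1) = q i := by
  set u : Fin N → ℝ := fun j => Real.log (s j) with hu
  have h : ∀ i, Real.exp (surplus N μ u) * fderiv ℝ (surplus N μ) u (Pi.single i 1) = q i := by
    intro i
    rw [← hs i, genH, fderiv_exp (differentiableAt_surplus hac hint u)]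
    simp
  have h0 : Real.exp (surplus N μ u) = 1 := by
    rw [← hq, ← Finset.sum_congr rfl fun i _ => h i, ← Finset.mul_sum,
      sum_fderiv_surplus hac hint, mul_one]
  refine ⟨Real.exp_eq_one_iff _ |>.1 h0, fun i => ?_⟩
  rw [← h i, h0, one_mul]

/-- Fenchel–Young for the surplus, with the conjugate at `q` written as `q · log s` where
`H(s) = q`. -/
lemma fenchel_young {N : ℕ} [Nonempty (Fin N)] {μ : Measure (Fin N → ℝ)}
    [IsProbabilityMeasure μ] (hac : μ ≪ volume) (hint : ∀ i, Integrable (fun x => x i) μ)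
    {q s : Fin N → ℝ} (hq : ∑ i, q i = 1) (hs : ∀ i, genH N μ s i = q i) (z : Fin N → ℝ) :
    ∑ i, z i * q i - ∑ i, q i * Real.log (s i) ≤ surplus N μ z ∧
    (∑ i, z i * q i - ∑ i, q i * Real.log (s i) = surplus N μ z ↔
      ∀ i, q i = fderiv ℝ (surplus N μ) z (Pi.single i 1)) := by
  obtain ⟨h0, hg⟩ := surplus_log_rightInverse hac hint hq hs
  set u : Fin N → ℝ := fun j => Real.log (s j) with hu
  have hd := differentiableAt_surplus hac hint
  have hconv := convexOn_surplus (μ := μ) hint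
  have hle : ∀ y : Fin N → ℝ, ∑ i, y i * q i - ∑ i, q i * Real.log (s i) ≤ surplus N μ y := by
    intro y
    have h := hconv.tangent_le (hd u) y
    rw [h0, zero_add, clm_apply_eq_sum] at h
    simp only [hg, Pi.sub_apply, sub_mul, Finset.sum_sub_distrib] at h
    simpa [hu, mul_comm] using h
  refine ⟨hle z, fun heq i => ?_, fun hgz => le_antisymm (hle z) ?_⟩
  · -- Equality makes `z` a global minimizer of `y ↦ W(y) - y · q`, hence a critical point.
    let D : (Fin N → ℝ) →L[ℝ] ℝ := ∑ i, q i • ContinuousLinearMap.proj (R := ℝ) i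
    have hD : ∀ y, D y = ∑ i, y i * q i := fun y => by
      simp [D, mul_comm]
    have hmin : IsLocalMin (fun y => surplus N μ y - D y) z := by
      refine Filter.Eventually.of_forall fun y => ?_
      have := hle y
      simp only [hD]
      linarith
    have hz := hmin.hasFDerivAt_eq_zero ((hd z).hasFDerivAt.sub D.hasFDerivAt)
    rw [sub_eq_zero.1 hz, hD]
    simp [Pi.single_apply]
  · have h := hconv.tangent_le (hd z) u
    rw [h0, clm_apply_eq_sum] at h
    simp only [← hgz, Pi.sub_apply, sub_mul, Finset.sum_sub_distrib] at h
    have : ∑ i, u i * q i = ∑ i, q i * Real.log (s i) := by simp [hu, mul_comm]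
    linarith

/-- Since `Ω_S(p⁰)` is linear in `p⁰` once `log S(p⁰)` is fixed, it shifts each payoff vector by
`log S(p⁰)`. -/
lemma geriObj_eq (N : ℕ) (V : Finset (Fin N → ℝ)) (w : (Fin N → ℝ) → ℝ)
    (S : (Fin N → ℝ) → (Fin N → ℝ)) (p : (Fin N → ℝ) → (Fin N → ℝ)) :
    geriObj N V w S p = ∑ v ∈ V, w v *
      (∑ i, (v i + Real.log (S (uncond N V w p) i)) * p v i
        - ∑ i, p v i * Real.log (S (p v) i)) := by
  have h : ∑ i, uncond N V w p i * Real.log (S (uncond N V w p) i)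
      = ∑ v ∈ V, w v * ∑ i, Real.log (S (uncond N V w p) i) * p v i := by
    simp_rw [Finset.mul_sum]
    rw [Finset.sum_comm]
    refine Finset.sum_congr rfl fun i _ => ?_
    conv_lhs => rw [uncond, Finset.sum_mul]
    exact Finset.sum_congr rfl fun v _ => by ring
  simp only [geriObj, geriCost, genEntropy, h, add_mul, Finset.sum_add_distrib, mul_sub, mul_add,
    Finset.sum_sub_distrib, mul_neg, Finset.sum_neg_distrib]
  ring

/-- conditional optimality of the GERI program given unconditional probabilities:
if `S` is a right inverse of `H`, then for every strategy `p(·)` whose values `p(v)` and whose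
unconditional probabilities `p⁰` all lie in the relative interior of `Δ`, the GERI objective
satisfies `G(p(·)) ≤ ∑_{v ∈ 𝒱} μ(v) W(v + log S(p⁰))`, with equality if and only if
`p(v) = ∇W(v + log S(p⁰))` for every `v ∈ 𝒱` with `μ(v) > 0`. -/
theorem geri_conditional_optimality (N : ℕ) (hN : 2 ≤ N) (μ : Measure (Fin N → ℝ))
    (hprob : IsProbabilityMeasure μ) (hac : μ ≪ volume)
    (hsupp : ∀ U : Set (Fin N → ℝ), IsOpen U → U.Nonempty → 0 < μ U)
    (hint : ∀ i, Integrable (fun x => x i) μ)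
    (V : Finset (Fin N → ℝ)) (w : (Fin N → ℝ) → ℝ)
    (hw0 : ∀ v ∈ V, 0 ≤ w v) (hw1 : ∑ v ∈ V, w v = 1)
    (S : (Fin N → ℝ) → (Fin N → ℝ))
    (hSright : ∀ q ∈ unitSimplexRI N, ∀ i, genH N μ (S q) i = q i)
    (p : (Fin N → ℝ) → (Fin N → ℝ))
    (hp : ∀ v ∈ V, p v ∈ unitSimplexRI N)
    (hp0 : uncond N V w p ∈ unitSimplexRI N) :
    geriObj N V w S p ≤
      (∑ v ∈ V, w v * surplus N μ (fun j => v j + Real.log (S (uncond N V w p) j))) ∧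
    (geriObj N V w S p =
        (∑ v ∈ V, w v * surplus N μ (fun j => v j + Real.log (S (uncond N V w p) j))) ↔
      ∀ v ∈ V, 0 < w v → ∀ i, p v i =
        fderiv ℝ (surplus N μ) (fun j => v j + Real.log (S (uncond N V w p) j))
          (Pi.single i 1)) := by
  have : Nonempty (Fin N) := ⟨⟨0, by omega⟩⟩
  have key := fun v (hv : v ∈ V) => fenchel_young hac hint (hp v hv).2 (hSright (p v) (hp v hv))
    (fun j => v j + Real.log (S (uncond N V w p) j))
  have hterm := fun v (hv : v ∈ V) => mul_le_mul_of_nonneg_left (key v hv).1 (hw0 v hv)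
  rw [geriObj_eq]
  refine ⟨Finset.sum_le_sum hterm, ?_⟩
  rw [Finset.sum_eq_sum_iff_of_le hterm]
  refine forall₂_congr fun v hv => ?_
  rw [← (key v hv).2, mul_eq_mul_left_iff]
  constructor
  · rintro (h | h) hpos
    · exact h
    · exact absurd h hpos.ne'
  · intro h
    rcases (hw0 v hv).eq_or_lt with h0 | h0
    · exact Or.inr h0.symm
    · exact Or.inl (h h0)
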